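/- Let H be a finite graph whose maximum degree Δ(H) is even and differs from its minimum degree by at most 2, and let G be the full subdivision of H. Then G admits a cyclic interval Δ(G)-coloring (note Δ(G) = Δ(H) when Δ(H) ≥ 2). -/

import Mathlib

open SimpleGraph

/-- The set of colors appearing on edges incident to `v` under the edge coloring `c`. -/
def colorsAt {V : Type*} (G : SimpleGraph V) (c : Sym2 V → ℕ) (v : V) : Set ℕ :=
  c '' (G.incidenceSet v)

/-- A set of natural numbers is an interval of consecutive integers. -/
def IsIntervalSet (S : Set ℕ) : Prop := ∃ a b : ℕ, S = Set.Icc a b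

/-- A proper edge coloring of `G` with colors `1, …, t`: every edge gets a color in
`{1, …, t}` and distinct edges sharing a vertex get distinct colors. -/
def IsProperEdgeColoring {V : Type*} (G : SimpleGraph V) (t : ℕ) (c : Sym2 V → ℕ) : Prop :=
  (∀ e ∈ G.edgeSet, c e ∈ Set.Icc 1 t) ∧
  ∀ e₁ ∈ G.edgeSet, ∀ e₂ ∈ G.edgeSet, e₁ ≠ e₂ → (∃ v, v ∈ e₁ ∧ v ∈ e₂) → c e₁ ≠ c e₂

/-- A cyclic interval `t`-coloring of `G`: a proper edge coloring with colors `1, …, t`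
such that at every vertex the set of incident colors, or its complement in `{1, …, t}`,
is an interval of consecutive integers. -/
def IsCyclicIntervalColoring {V : Type*} (G : SimpleGraph V) (t : ℕ) (c : Sym2 V → ℕ) : Prop :=
  IsProperEdgeColoring G t c ∧
  ∀ v : V, IsIntervalSet (colorsAt G c v) ∨ IsIntervalSet (Set.Icc 1 t \ colorsAt G c v)

/-- The full subdivision of `H`: the bipartite graph on `V(H) ⊕ E(H)` where
`v : V(H)` is adjacent to `e : E(H)` iff `v` is an endpoint of `e`. -/
def fullSubdivision {V : Type*} (H : SimpleGraph V) : SimpleGraph (V ⊕ H.edgeSet) :=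
  SimpleGraph.fromRel (fun x y =>
    ∃ (v : V) (e : H.edgeSet), v ∈ (e : Sym2 V) ∧ x = Sum.inl v ∧ y = Sum.inr e)

noncomputable instance {V : Type*} (H : SimpleGraph V) :
    DecidableRel (fullSubdivision H).Adj := Classical.decRel _

theorem orient_lemma {E V : Type*} [Fintype E] [Fintype V] [DecidableEq E] [DecidableEq V]
    (a b : E → V) (k : ℕ)
    (hd : ∀ v, (Finset.univ.filter (fun e => a e = v)).card
      + (Finset.univ.filter (fun e => b e = v)).card = 2 * k) :
    ∃ t h : E → V, (∀ e, (t e = a e ∧ h e = b e) ∨ (t e = b e ∧ h e = a e)) ∧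
      (∀ v, (Finset.univ.filter (fun e => t e = v)).card = k) ∧
      (∀ v, (Finset.univ.filter (fun e => h e = v)).card = k) := by
  have hall := (Finset.all_card_le_biUnion_card_iff_exists_injective
    (fun e : E => ({a e, b e} : Finset V) ×ˢ (Finset.univ : Finset (Fin k)))).1 (by
      intro S
      have h1 : S.biUnion (fun e : E => ({a e, b e} : Finset V) ×ˢ (Finset.univ : Finset (Fin k)))
          = (S.biUnion (fun e => ({a e, b e} : Finset V))) ×ˢ (Finset.univ : Finset (Fin k)) := by
        ext ⟨x, y⟩
        simp
      rw [h1, Finset.card_product, Finset.card_univ, Fintype.card_fin]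
      set U := S.biUnion (fun e => ({a e, b e} : Finset V)) with hU
      have ha : S.card = ∑ v ∈ U, (S.filter (fun e => a e = v)).card :=
        Finset.card_eq_sum_card_fiberwise (fun e he => by
          simp only [hU, Finset.coe_biUnion, Set.mem_iUnion]
          exact ⟨e, he, by simp⟩)
      have hb : S.card = ∑ v ∈ U, (S.filter (fun e => b e = v)).card :=
        Finset.card_eq_sum_card_fiberwise (fun e he => by
          simp only [hU, Finset.coe_biUnion, Set.mem_iUnion]
          exact ⟨e, he, by simp⟩)
      have hs : ∑ v ∈ U, ((S.filter (fun e => a e = v)).card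
          + (S.filter (fun e => b e = v)).card) ≤ ∑ v ∈ U, 2 * k := by
        apply Finset.sum_le_sum
        intro v _
        rw [← hd v]
        apply Nat.add_le_add <;>
        exact Finset.card_le_card (Finset.filter_subset_filter _ (Finset.subset_univ _))
      rw [Finset.sum_add_distrib, ← ha, ← hb, Finset.sum_const, smul_eq_mul] at hs
      nlinarith)
  obtain ⟨f, hf, hfm⟩ := hall
  have hcard : Fintype.card E = Fintype.card (V × Fin k) := by
    have ha : Fintype.card E = ∑ v, (Finset.univ.filter (fun e => a e = v)).card :=
      Finset.card_eq_sum_card_fiberwise (fun e he => by simp)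
    have hb : Fintype.card E = ∑ v, (Finset.univ.filter (fun e => b e = v)).card :=
      Finset.card_eq_sum_card_fiberwise (fun e he => by simp)
    have hs := Finset.sum_congr (rfl : (Finset.univ : Finset V) = Finset.univ) (fun v _ => hd v)
    rw [Finset.sum_add_distrib, ← ha, ← hb, Finset.sum_const, smul_eq_mul, Finset.card_univ] at hs
    rw [Fintype.card_prod, Fintype.card_fin]
    nlinarith
  have hbij : Function.Bijective f := (Fintype.bijective_iff_injective_and_card f).2 ⟨hf, hcard⟩
  have htab : ∀ e, (f e).1 = a e ∨ (f e).1 = b e := by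
    intro e
    have := hfm e
    simpa using this
  have hor : ∀ e, ((f e).1 = a e ∧ (if (f e).1 = a e then b e else a e) = b e) ∨
      ((f e).1 = b e ∧ (if (f e).1 = a e then b e else a e) = a e) := by
    intro e
    rcases htab e with h | h
    · left; simp [h]
    · by_cases h' : b e = a e
      · left; simp [h, h']
      · right; simp [h, h']
  have htc : ∀ v, (Finset.univ.filter (fun e => (f e).1 = v)).card = k := by
    intro v
    have : (Finset.univ.filter (fun e => (f e).1 = v)).card
        = (Finset.univ.filter (fun p : V × Fin k => p.1 = v)).card := by
      apply Finset.card_bij (fun e _ => f e)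
      · intro e he; simpa using he
      · intro e _ e' _ h; exact hf h
      · intro p hp
        obtain ⟨e, rfl⟩ := hbij.2 p
        exact ⟨e, by simpa using hp, rfl⟩
    rw [this]
    have h2 : (Finset.univ.filter (fun p : V × Fin k => p.1 = v))
        = ({v} : Finset V) ×ˢ (Finset.univ : Finset (Fin k)) := by
      ext ⟨x, y⟩; simp [eq_comm]
    rw [h2]; simp
  refine ⟨fun e => (f e).1, fun e => if (f e).1 = a e then b e else a e, hor, htc, ?_⟩
  intro v
  have h1 := htc v
  have h2 := hd v
  have h3 : (Finset.univ.filter (fun e => (f e).1 = v)).card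
      + (Finset.univ.filter (fun e => (if (f e).1 = a e then b e else a e) = v)).card
      = (Finset.univ.filter (fun e => a e = v)).card
      + (Finset.univ.filter (fun e => b e = v)).card := by
    simp only [Finset.card_filter, ← Finset.sum_add_distrib]
    apply Finset.sum_congr rfl
    intro e _
    rcases hor e with ⟨h, h'⟩ | ⟨h, h'⟩
    · rw [h', h]
    · rw [h', h, add_comm]
  change (Finset.univ.filter (fun e => (if (f e).1 = a e then b e else a e) = v)).card = k
  omega

theorem konig_lemma {E V : Type*} [Fintype E] [Fintype V] [DecidableEq E] [DecidableEq V]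
    (t h : E → V) (k : ℕ) : ∀ (s : Finset E)
    (_ : ∀ v, (s.filter (fun e => t e = v)).card = k)
    (_ : ∀ v, (s.filter (fun e => h e = v)).card = k),
    ∃ c : E → ℕ, (∀ e ∈ s, c e < k) ∧
      (∀ e ∈ s, ∀ e' ∈ s, c e = c e' → t e = t e' → e = e') ∧
      (∀ e ∈ s, ∀ e' ∈ s, c e = c e' → h e = h e' → e = e') := by
  induction k with
  | zero =>
    intro s ht hh
    have : ∀ e, e ∉ s := by
      intro e he
      have := ht (t e)
      rw [Finset.card_eq_zero] at this
      have h2 : e ∈ s.filter (fun e' => t e' = t e) := by simp [he]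
      rw [this] at h2
      simp at h2
    exact ⟨fun _ => 0, fun e he => absurd he (this e), fun e he => absurd he (this e),
      fun e he => absurd he (this e)⟩
  | succ k ih =>
    intro s ht hh
    have hall := (Finset.all_card_le_biUnion_card_iff_exists_injective
      (fun v : V => (s.filter (fun e => t e = v)).image h)).1 (by
        intro S
        set U := S.biUnion (fun v : V => (s.filter (fun e => t e = v)).image h) with hU
        have h1 : (s.filter (fun e => t e ∈ S)).card = ∑ v ∈ S, (k + 1) := by
          rw [Finset.card_eq_sum_card_fiberwise (f := t) (t := S) (fun e he => by
            have := Finset.mem_coe.1 he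
            exact (Finset.mem_filter.1 this).2)]
          apply Finset.sum_congr rfl
          intro v hv
          rw [← ht v, Finset.filter_filter]
          congr 1
          apply Finset.filter_congr
          intro e _
          constructor
          · exact fun h => h.2
          · rintro rfl; exact ⟨hv, rfl⟩
        have h2 : (s.filter (fun e => h e ∈ U)).card = ∑ v ∈ U, (k + 1) := by
          rw [Finset.card_eq_sum_card_fiberwise (f := h) (t := U) (fun e he => by
            have := Finset.mem_coe.1 he
            exact (Finset.mem_filter.1 this).2)]
          apply Finset.sum_congr rfl
          intro v hv
          rw [← hh v, Finset.filter_filter]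
          congr 1
          apply Finset.filter_congr
          intro e _
          constructor
          · exact fun h => h.2
          · rintro rfl; exact ⟨hv, rfl⟩
        have h3 : (s.filter (fun e => t e ∈ S)).card ≤ (s.filter (fun e => h e ∈ U)).card := by
          apply Finset.card_le_card
          intro e he
          rw [Finset.mem_filter] at he ⊢
          refine ⟨he.1, ?_⟩
          rw [hU, Finset.mem_biUnion]
          exact ⟨t e, he.2, Finset.mem_image.2 ⟨e, by simp [he.1], rfl⟩⟩
        rw [h1, h2, Finset.sum_const, Finset.sum_const, smul_eq_mul, smul_eq_mul] at h3
        exact Nat.le_of_mul_le_mul_right h3 (Nat.succ_pos k))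
    obtain ⟨g, hg, hgm⟩ := hall
    have hex : ∀ v, ∃ e, e ∈ s ∧ t e = v ∧ h e = g v := by
      intro v
      obtain ⟨e, he, heq⟩ := Finset.mem_image.1 (hgm v)
      exact ⟨e, (Finset.mem_filter.1 he).1, (Finset.mem_filter.1 he).2, heq⟩
    choose m hms hmt hmh using hex
    have hgs : Function.Surjective g := Finite.injective_iff_surjective.1 hg
    have hmem : ∀ e, e ∈ s \ Finset.univ.image m ↔ e ∈ s ∧ ∀ v, m v ≠ e := by
      intro e; simp
    obtain ⟨c, hc, hct, hch⟩ := ih (s \ Finset.univ.image m) (by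
        intro v
        have : (s \ Finset.univ.image m).filter (fun e => t e = v)
            = (s.filter (fun e => t e = v)).erase (m v) := by
          ext e
          simp only [Finset.mem_filter, hmem, Finset.mem_erase]
          constructor
          · rintro ⟨⟨h1, h2⟩, h3⟩
            exact ⟨fun h => h2 v h.symm, h1, h3⟩
          · rintro ⟨h1, h2, h3⟩
            refine ⟨⟨h2, ?_⟩, h3⟩
            rintro w rfl
            rw [hmt] at h3
            exact h1 (by rw [h3])
        rw [this, Finset.card_erase_of_mem (by simp [hms, hmt]), ht v]
        rfl) (by
        intro v
        obtain ⟨u, rfl⟩ := hgs v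
        have : (s \ Finset.univ.image m).filter (fun e => h e = g u)
            = (s.filter (fun e => h e = g u)).erase (m u) := by
          ext e
          simp only [Finset.mem_filter, hmem, Finset.mem_erase]
          constructor
          · rintro ⟨⟨h1, h2⟩, h3⟩
            exact ⟨fun h => h2 u h.symm, h1, h3⟩
          · rintro ⟨h1, h2, h3⟩
            refine ⟨⟨h2, ?_⟩, h3⟩
            rintro w rfl
            rw [hmh] at h3
            exact h1 (by rw [hg h3])
        rw [this, Finset.card_erase_of_mem (by simp [hms, hmh]), hh (g u)]
        rfl)
    classical
    refine ⟨fun e => if ∃ v, m v = e then k else c e, ?_, ?_, ?_⟩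
    · intro e he
      by_cases hv : ∃ v, m v = e
      · simp [hv]
      · have := hc e ((hmem e).2 ⟨he, fun v hv' => hv ⟨v, hv'⟩⟩)
        simp only [hv, if_false]; omega
    · intro e he e' he' hcc htt
      by_cases hv : ∃ v, m v = e <;> by_cases hv' : ∃ v, m v = e'
      · obtain ⟨v, rfl⟩ := hv
        obtain ⟨v', rfl⟩ := hv'
        rw [hmt, hmt] at htt
        rw [htt]
      · have := hc e' ((hmem e').2 ⟨he', fun v h' => hv' ⟨v, h'⟩⟩)
        simp only [hv, hv', if_true, if_false] at hcc; omega
      · have := hc e ((hmem e).2 ⟨he, fun v h' => hv ⟨v, h'⟩⟩)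
        simp only [hv, hv', if_true, if_false] at hcc; omega
      · simp only [hv, hv', if_false] at hcc
        exact hct e ((hmem e).2 ⟨he, fun v h' => hv ⟨v, h'⟩⟩) e'
          ((hmem e').2 ⟨he', fun v h' => hv' ⟨v, h'⟩⟩) hcc htt
    · intro e he e' he' hcc htt
      by_cases hv : ∃ v, m v = e <;> by_cases hv' : ∃ v, m v = e'
      · obtain ⟨v, rfl⟩ := hv
        obtain ⟨v', rfl⟩ := hv'
        rw [hmh, hmh] at htt
        rw [hg htt]
      · have := hc e' ((hmem e').2 ⟨he', fun v h' => hv' ⟨v, h'⟩⟩)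
        simp only [hv, hv', if_true, if_false] at hcc; omega
      · have := hc e ((hmem e).2 ⟨he, fun v h' => hv ⟨v, h'⟩⟩)
        simp only [hv, hv', if_true, if_false] at hcc; omega
      · simp only [hv, hv', if_false] at hcc
        exact hch e ((hmem e).2 ⟨he, fun v h' => hv ⟨v, h'⟩⟩) e'
          ((hmem e').2 ⟨he', fun v h' => hv' ⟨v, h'⟩⟩) hcc htt

theorem surj_of_fiber {E V : Type*} [Fintype E] [DecidableEq E] [DecidableEq V]
    (t : E → V) (k : ℕ) (c : E → ℕ) (v : V)
    (ht : (Finset.univ.filter (fun e => t e = v)).card = k) (hc : ∀ e, c e < k)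
    (hct : ∀ e e', c e = c e' → t e = t e' → e = e') (i : ℕ) (hi : i < k) :
    ∃ e, t e = v ∧ c e = i := by
  have himg : (Finset.univ.filter (fun e => t e = v)).image c = Finset.range k := by
    apply Finset.eq_of_subset_of_card_le
    · intro x hx
      obtain ⟨e, _, rfl⟩ := Finset.mem_image.1 hx
      exact Finset.mem_range.2 (hc e)
    · rw [Finset.card_range, Finset.card_image_of_injOn, ht]
      intro e he e' he' h
      have h1 : t e = v := by simpa using he
      have h2 : t e' = v := by simpa using he'
      exact hct e e' h (h1.trans h2.symm)
  have : i ∈ (Finset.univ.filter (fun e => t e = v)).image c := by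
    rw [himg]; exact Finset.mem_range.2 hi
  obtain ⟨e, he, rfl⟩ := Finset.mem_image.1 this
  exact ⟨e, by simpa using he, rfl⟩

theorem petersen_lemma {E V : Type*} [Fintype E] [Fintype V] [DecidableEq E] [DecidableEq V]
    (a b : E → V) (k : ℕ)
    (hd : ∀ v, (Finset.univ.filter (fun e => a e = v)).card
      + (Finset.univ.filter (fun e => b e = v)).card = 2 * k) :
    ∃ (t h : E → V) (c : E → ℕ),
      (∀ e, (t e = a e ∧ h e = b e) ∨ (t e = b e ∧ h e = a e)) ∧
      (∀ e, c e < k) ∧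
      (∀ e e', c e = c e' → t e = t e' → e = e') ∧
      (∀ e e', c e = c e' → h e = h e' → e = e') ∧
      (∀ v, ∀ i < k, ∃ e, t e = v ∧ c e = i) ∧
      (∀ v, ∀ i < k, ∃ e, h e = v ∧ c e = i) := by
  obtain ⟨t, h, hor, ht, hh⟩ := orient_lemma a b k hd
  obtain ⟨c, hc, hct, hch⟩ := konig_lemma t h k Finset.univ ht hh
  have hc' : ∀ e, c e < k := fun e => hc e (Finset.mem_univ _)
  have hct' : ∀ e e', c e = c e' → t e = t e' → e = e' :=
    fun e e' => hct e (Finset.mem_univ _) e' (Finset.mem_univ _)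
  have hch' : ∀ e e', c e = c e' → h e = h e' → e = e' :=
    fun e e' => hch e (Finset.mem_univ _) e' (Finset.mem_univ _)
  exact ⟨t, h, c, hor, hc', hct', hch',
    fun v i hi => surj_of_fiber t k c v (ht v) hc' hct' i hi,
    fun v i hi => surj_of_fiber h k c v (hh v) hc' hch' i hi⟩

theorem fs_adj_iff {V : Type*} (H : SimpleGraph V) (v : V) (e : H.edgeSet) :
    (fullSubdivision H).Adj (Sum.inl v) (Sum.inr e) ↔ v ∈ (e : Sym2 V) := by
  simp [fullSubdivision, SimpleGraph.fromRel_adj]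

theorem fs_not_adj_ll {V : Type*} (H : SimpleGraph V) (v w : V) :
    ¬ (fullSubdivision H).Adj (Sum.inl v) (Sum.inl w) := by
  simp [fullSubdivision, SimpleGraph.fromRel_adj]

theorem fs_not_adj_rr {V : Type*} (H : SimpleGraph V) (e f : H.edgeSet) :
    ¬ (fullSubdivision H).Adj (Sum.inr e) (Sum.inr f) := by
  simp [fullSubdivision, SimpleGraph.fromRel_adj]

theorem fs_edge_iff {V : Type*} (H : SimpleGraph V) (z : Sym2 (V ⊕ H.edgeSet)) :
    z ∈ (fullSubdivision H).edgeSet ↔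
      ∃ (v : V) (e : H.edgeSet), v ∈ (e : Sym2 V) ∧ z = s(Sum.inl v, Sum.inr e) := by
  constructor
  · induction z with
    | h x y =>
      intro hz
      rw [SimpleGraph.mem_edgeSet] at hz
      rcases x with v | e <;> rcases y with w | f
      · exact absurd hz (fs_not_adj_ll H v w)
      · exact ⟨v, f, (fs_adj_iff H v f).1 hz, rfl⟩
      · exact ⟨w, e, (fs_adj_iff H w e).1 hz.symm, Sym2.eq_swap⟩
      · exact absurd hz (fs_not_adj_rr H e f)
  · rintro ⟨v, e, hv, rfl⟩
    exact (fs_adj_iff H v e).2 hv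

theorem fs_degree_inl {V : Type*} [Fintype V] [DecidableEq V] (H : SimpleGraph V)
    [DecidableRel H.Adj] (v : V) :
    (fullSubdivision H).degree (Sum.inl v) = H.degree v := by
  rw [← H.card_incidenceFinset_eq_degree v, ← SimpleGraph.card_neighborFinset_eq_degree]
  symm
  apply Finset.card_bij (fun e he => Sum.inr ⟨e, by
    rw [SimpleGraph.mem_incidenceFinset] at he; exact he.1⟩)
  · intro e he
    rw [SimpleGraph.mem_neighborFinset, fs_adj_iff]
    rw [SimpleGraph.mem_incidenceFinset] at he
    exact he.2
  · intro e he f hf h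
    simpa using h
  · intro x hx
    rw [SimpleGraph.mem_neighborFinset] at hx
    rcases x with w | e
    · exact absurd hx (fs_not_adj_ll H v w)
    · refine ⟨e, ?_, rfl⟩
      rw [SimpleGraph.mem_incidenceFinset]
      exact ⟨e.2, (fs_adj_iff H v e).1 hx⟩

theorem fs_degree_inr {V : Type*} [Fintype V] [DecidableEq V] (H : SimpleGraph V)
    [DecidableRel H.Adj] (e : H.edgeSet) :
    (fullSubdivision H).degree (Sum.inr e) ≤ 2 := by
  rw [← SimpleGraph.card_neighborFinset_eq_degree]
  obtain ⟨z, hz⟩ := e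
  induction z with
  | h a b =>
    have : (fullSubdivision H).neighborFinset (Sum.inr ⟨s(a, b), hz⟩)
        ⊆ ({Sum.inl a, Sum.inl b} : Finset (V ⊕ H.edgeSet)) := by
      intro x hx
      rw [SimpleGraph.mem_neighborFinset] at hx
      rcases x with w | f
      · have := (fs_adj_iff H w _).1 hx.symm
        simpa using this
      · exact absurd hx (fs_not_adj_rr H _ f)
    exact (Finset.card_le_card this).trans Finset.card_le_two

theorem fs_maxDegree {V : Type*} [Fintype V] [DecidableEq V] (H : SimpleGraph V)
    [DecidableRel H.Adj] (h2 : 2 ≤ H.maxDegree) :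
    (fullSubdivision H).maxDegree = H.maxDegree := by
  apply le_antisymm
  · apply SimpleGraph.maxDegree_le_of_forall_degree_le
    rintro (v | e)
    · rw [fs_degree_inl]; exact H.degree_le_maxDegree v
    · exact (fs_degree_inr H e).trans h2
  · apply SimpleGraph.maxDegree_le_of_forall_degree_le
    intro v
    rw [← fs_degree_inl]
    exact SimpleGraph.degree_le_maxDegree _ _

theorem ends_count {V : Type*} [Fintype V] [DecidableEq V] (H : SimpleGraph V)
    [DecidableRel H.Adj] (a b : H.edgeSet → V) (hab : ∀ e : H.edgeSet, (e : Sym2 V) = s(a e, b e)) (v : V) :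
    (∑ e : H.edgeSet, if a e = v then 1 else 0) + (∑ e : H.edgeSet, if b e = v then 1 else 0)
      = H.degree v := by
  have hne : ∀ e, a e ≠ b e := by
    intro e h
    have h1 := e.2
    rw [hab e, SimpleGraph.mem_edgeSet] at h1
    exact h1.ne h
  rw [← H.card_incidenceFinset_eq_degree v, ← Finset.sum_add_distrib]
  have : ∀ e : H.edgeSet, ((if a e = v then 1 else 0) + (if b e = v then 1 else 0) : ℕ)
      = if v ∈ (e : Sym2 V) then 1 else 0 := by
    intro e
    have h1 : v ∈ (e : Sym2 V) ↔ a e = v ∨ b e = v := by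
      rw [hab e, Sym2.mem_iff]
      simp [eq_comm]
    have := hne e
    simp only [h1]
    by_cases h2 : a e = v <;> by_cases h3 : b e = v <;> simp [h2, h3]
    exact this (h2.trans h3.symm)
  rw [Finset.sum_congr rfl (fun e _ => this e), ← Finset.card_filter]
  apply Finset.card_bij (fun (e : H.edgeSet) _ => (e : Sym2 V))
  · intro e he
    rw [SimpleGraph.mem_incidenceFinset]
    exact ⟨e.2, by simpa using he⟩
  · intro e _ f _ h
    exact Subtype.ext h
  · intro e he
    rw [SimpleGraph.mem_incidenceFinset] at he
    exact ⟨⟨e, he.1⟩, by simpa using he.2, rfl⟩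

theorem color_exists {V : Type*} [DecidableEq V] (H : SimpleGraph V)
    (t h : H.edgeSet → V) (hne : ∀ e, t e ≠ h e) (c : H.edgeSet → ℕ) :
    ∃ col : Sym2 (V ⊕ H.edgeSet) → ℕ,
      (∀ e, col s(Sum.inl (t e), Sum.inr e) = 2 * c e + 1) ∧
      (∀ e, col s(Sum.inl (h e), Sum.inr e) = 2 * c e + 2) := by
  let g : V → H.edgeSet → ℕ := fun v e => if t e = v then 2 * c e + 1 else 2 * c e + 2
  let F : V ⊕ H.edgeSet → V ⊕ H.edgeSet → ℕ := fun x y =>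
    match x, y with
    | Sum.inl v, Sum.inr e => g v e
    | Sum.inr e, Sum.inl v => g v e
    | _, _ => 0
  refine ⟨Sym2.lift ⟨F, ?_⟩, ?_, ?_⟩
  · rintro (v | e) (w | f) <;> rfl
  · intro e
    simp [Sym2.lift_mk, F, g]
  · intro e
    simp [Sym2.lift_mk, F, g, hne e]

theorem core_coloring {V : Type*} [DecidableEq V] (H : SimpleGraph V) (k : ℕ)
    (t h : H.edgeSet → V) (hth : ∀ e : H.edgeSet, (e : Sym2 V) = s(t e, h e)) (c : H.edgeSet → ℕ)
    (hc : ∀ e, c e < k)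
    (hct : ∀ e e', c e = c e' → t e = t e' → e = e')
    (hch : ∀ e e', c e = c e' → h e = h e' → e = e')
    (hmiss : ∀ v, ∃ p q : ℕ, ∀ x, x ∈ Set.Icc p q ↔ x ∈ Set.Icc 1 (2 * k) ∧
      ¬ ((∃ e, t e = v ∧ x = 2 * c e + 1) ∨ (∃ e, h e = v ∧ x = 2 * c e + 2))) :
    ∃ col : Sym2 (V ⊕ H.edgeSet) → ℕ,
      IsCyclicIntervalColoring (fullSubdivision H) (2 * k) col := by
  have hne : ∀ e, t e ≠ h e := by
    intro e he
    have h1 := e.2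
    rw [hth e, SimpleGraph.mem_edgeSet] at h1
    exact h1.ne he
  obtain ⟨col, hcol1, hcol2⟩ := color_exists H t h hne c
  have hmem : ∀ v (e : H.edgeSet), v ∈ (e : Sym2 V) ↔ v = t e ∨ v = h e := by
    intro v e
    rw [hth e, Sym2.mem_iff]
  have hedge : ∀ z, z ∈ (fullSubdivision H).edgeSet ↔ ∃ e,
      (z = s(Sum.inl (t e), Sum.inr e) ∨ z = s(Sum.inl (h e), Sum.inr e)) := by
    intro z
    rw [fs_edge_iff]
    constructor
    · rintro ⟨v, e, hv, rfl⟩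
      rcases (hmem v e).1 hv with rfl | rfl
      · exact ⟨e, Or.inl rfl⟩
      · exact ⟨e, Or.inr rfl⟩
    · rintro ⟨e, rfl | rfl⟩
      · exact ⟨t e, e, (hmem _ e).2 (Or.inl rfl), rfl⟩
      · exact ⟨h e, e, (hmem _ e).2 (Or.inr rfl), rfl⟩
  refine ⟨col, ⟨?_, ?_⟩, ?_⟩
  · intro z hz
    obtain ⟨e, rfl | rfl⟩ := (hedge z).1 hz
    · have := hc e
      rw [hcol1, Set.mem_Icc]; omega
    · have := hc e
      rw [hcol2, Set.mem_Icc]; omega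
  · intro z₁ hz₁ z₂ hz₂ hzne ⟨x, hx₁, hx₂⟩ hcc
    apply hzne
    obtain ⟨e, rfl | rfl⟩ := (hedge z₁).1 hz₁ <;> obtain ⟨f, rfl | rfl⟩ := (hedge z₂).1 hz₂
    · rw [hcol1, hcol1] at hcc
      have hcc' : c e = c f := by omega
      have : e = f := by
        rcases x with x | x
        · simp at hx₁ hx₂
          exact hct e f hcc' (hx₁.symm.trans hx₂)
        · simp at hx₁ hx₂
          exact hx₁.symm.trans hx₂
      rw [this]
    · rw [hcol1, hcol2] at hcc
      omega
    · rw [hcol1, hcol2] at hcc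
      omega
    · rw [hcol2, hcol2] at hcc
      have hcc' : c e = c f := by omega
      have : e = f := by
        rcases x with x | x
        · simp at hx₁ hx₂
          exact hch e f hcc' (hx₁.symm.trans hx₂)
        · simp at hx₁ hx₂
          exact hx₁.symm.trans hx₂
      rw [this]
  · rintro (v | e)
    · right
      obtain ⟨p, q, hpq⟩ := hmiss v
      refine ⟨p, q, ?_⟩
      ext x
      rw [hpq x, Set.mem_sdiff]
      have : x ∈ colorsAt (fullSubdivision H) col (Sum.inl v) ↔
          ((∃ e, t e = v ∧ x = 2 * c e + 1) ∨ (∃ e, h e = v ∧ x = 2 * c e + 2)) := by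
        constructor
        · rintro ⟨z, ⟨hz, hvz⟩, rfl⟩
          obtain ⟨e, rfl | rfl⟩ := (hedge z).1 hz
          · left
            simp at hvz
            exact ⟨e, hvz.symm, hcol1 e⟩
          · right
            simp at hvz
            exact ⟨e, hvz.symm, hcol2 e⟩
        · rintro (⟨e, rfl, rfl⟩ | ⟨e, rfl, rfl⟩)
          · exact ⟨_, ⟨(hedge _).2 ⟨e, Or.inl rfl⟩, by simp⟩, hcol1 e⟩
          · exact ⟨_, ⟨(hedge _).2 ⟨e, Or.inr rfl⟩, by simp⟩, hcol2 e⟩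
      rw [this]
    · left
      refine ⟨2 * c e + 1, 2 * c e + 2, ?_⟩
      ext x
      constructor
      · rintro ⟨z, ⟨hz, hvz⟩, rfl⟩
        obtain ⟨f, rfl | rfl⟩ := (hedge z).1 hz
        · simp at hvz
          subst hvz
          rw [hcol1, Set.mem_Icc]; omega
        · simp at hvz
          subst hvz
          rw [hcol2, Set.mem_Icc]; omega
      · intro hx
        rw [Set.mem_Icc] at hx
        have : x = 2 * c e + 1 ∨ x = 2 * c e + 2 := by omega
        rcases this with rfl | rfl
        · exact ⟨_, ⟨(hedge _).2 ⟨e, Or.inl rfl⟩, by simp⟩, hcol1 e⟩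
        · exact ⟨_, ⟨(hedge _).2 ⟨e, Or.inr rfl⟩, by simp⟩, hcol2 e⟩

/-- if the maximum degree of `H` is even and differs from the minimum degree
by at most `2`, then the full subdivision `G` of `H` has a cyclic interval
`Δ(G)`-coloring. -/
theorem stmt_2 {V : Type*} [Fintype V] [DecidableEq V] (H : SimpleGraph V)
    [DecidableRel H.Adj] (hEven : Even H.maxDegree)
    (hdiff : H.maxDegree - H.minDegree ≤ 2) :
    ∃ c : Sym2 (V ⊕ H.edgeSet) → ℕ,
      IsCyclicIntervalColoring (fullSubdivision H) ((fullSubdivision H).maxDegree) c := by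
  obtain ⟨k, hk⟩ := hEven
  rcases Nat.eq_zero_or_pos k with hk0 | hkpos
  · -- no edges at all
    have hno : ∀ z, z ∉ (fullSubdivision H).edgeSet := by
      intro z hz
      obtain ⟨v, e, hv, -⟩ := (fs_edge_iff H z).1 hz
      have h1 : (e : Sym2 V) ∈ H.incidenceFinset v := by
        rw [SimpleGraph.mem_incidenceFinset]
        exact ⟨e.2, hv⟩
      have h2 := Finset.card_pos.2 ⟨_, h1⟩
      rw [H.card_incidenceFinset_eq_degree] at h2
      have := H.degree_le_maxDegree v
      omega
    refine ⟨fun _ => 0, ⟨fun z hz => absurd hz (hno z), fun z hz => absurd hz (hno z)⟩, ?_⟩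
    intro v
    left
    refine ⟨1, 0, ?_⟩
    ext x
    constructor
    · rintro ⟨z, ⟨hz, _⟩, _⟩
      exact absurd hz (hno z)
    · intro hx
      rw [Set.mem_Icc] at hx
      omega
  rw [fs_maxDegree H (by omega), hk, ← two_mul]
  -- degrees
  have hdeg : ∀ v, H.degree v = 2 * k ∨ H.degree v + 1 = 2 * k ∨ H.degree v + 2 = 2 * k := by
    intro v
    have h1 := H.degree_le_maxDegree v
    have h2 := H.minDegree_le_degree v
    omega
  -- endpoints of the edges
  have hends : ∀ e : H.edgeSet, ∃ p : V × V, (e : Sym2 V) = s(p.1, p.2) := by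
    rintro ⟨z, hz⟩
    induction z with
    | h a b => exact ⟨(a, b), rfl⟩
  choose p hp using hends
  -- pairing of odd vertices
  obtain ⟨j, hj⟩ := H.even_card_odd_degree_vertices
  have hcardO : Fintype.card (Fin j ⊕ Fin j) = Fintype.card {v // Odd (H.degree v)} := by
    rw [Fintype.card_sum, Fintype.card_fin, Fintype.card_subtype, hj]
  let φ : Fin j ⊕ Fin j ≃ {v // Odd (H.degree v)} := Fintype.equivOfCardEq hcardO
  let L := {v // H.degree v + 2 = 2 * k}
  let a : H.edgeSet ⊕ (Fin j ⊕ L) → V := Sum.elim (fun e => (p e).1)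
    (Sum.elim (fun i => (φ (Sum.inl i)).1) (fun l => l.1))
  let b : H.edgeSet ⊕ (Fin j ⊕ L) → V := Sum.elim (fun e => (p e).2)
    (Sum.elim (fun i => (φ (Sum.inr i)).1) (fun l => l.1))
  have hreg : ∀ v, (Finset.univ.filter (fun e => a e = v)).card
      + (Finset.univ.filter (fun e => b e = v)).card = 2 * k := by
    intro v
    have h1 := ends_count H (fun e => (p e).1) (fun e => (p e).2) hp v
    have h2 : (∑ i : Fin j, if (φ (Sum.inl i)).1 = v then 1 else 0)
        + (∑ i : Fin j, if (φ (Sum.inr i)).1 = v then 1 else 0)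
        = if Odd (H.degree v) then 1 else 0 := by
      rw [← Fintype.sum_sum_type (fun x : Fin j ⊕ Fin j => if (φ x).1 = v then 1 else 0),
        Equiv.sum_comp φ (fun o => if o.1 = v then 1 else 0)]
      split_ifs with ho
      · rw [Finset.sum_eq_single (⟨v, ho⟩ : {v // Odd (H.degree v)})]
        · simp
        · rintro ⟨w, hw⟩ _ hne
          rw [if_neg]
          rintro rfl
          exact hne rfl
        · simp
      · apply Finset.sum_eq_zero
        rintro ⟨w, hw⟩ _
        rw [if_neg]
        rintro rfl
        exact ho hw
    have h3 : (∑ l : L, if l.1 = v then 1 else 0) = if H.degree v + 2 = 2 * k then 1 else 0 := by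
      split_ifs with ho
      · rw [Finset.sum_eq_single (⟨v, ho⟩ : L)]
        · simp
        · rintro ⟨w, hw⟩ _ hne
          rw [if_neg]
          rintro rfl
          exact hne rfl
        · simp
      · apply Finset.sum_eq_zero
        rintro ⟨w, hw⟩ _
        rw [if_neg]
        rintro rfl
        exact ho hw
    have hA : (Finset.univ.filter (fun e => a e = v)).card
        = (∑ e : H.edgeSet, if (p e).1 = v then 1 else 0)
          + ((∑ i : Fin j, if (φ (Sum.inl i)).1 = v then 1 else 0)
          + ∑ l : L, if l.1 = v then 1 else 0) := by
      rw [Finset.card_filter, Fintype.sum_sum_type, Fintype.sum_sum_type]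
      rfl
    have hB : (Finset.univ.filter (fun e => b e = v)).card
        = (∑ e : H.edgeSet, if (p e).2 = v then 1 else 0)
          + ((∑ i : Fin j, if (φ (Sum.inr i)).1 = v then 1 else 0)
          + ∑ l : L, if l.1 = v then 1 else 0) := by
      rw [Finset.card_filter, Fintype.sum_sum_type, Fintype.sum_sum_type]
      rfl
    rw [hA, hB]
    rcases hdeg v with hv | hv | hv
    · rw [if_neg (by rw [Nat.odd_iff]; omega)] at h2
      rw [if_neg (by omega)] at h3
      omega
    · rw [if_pos (by rw [Nat.odd_iff]; omega)] at h2
      rw [if_neg (by omega)] at h3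
      omega
    · rw [if_neg (by rw [Nat.odd_iff]; omega)] at h2
      rw [if_pos (by omega)] at h3
      omega
  obtain ⟨t, h, c, hor, hc, hct, hch, hst, hsh⟩ := petersen_lemma a b k hreg
  apply core_coloring H k (fun e => t (Sum.inl e)) (fun e => h (Sum.inl e)) ?_
    (fun e => c (Sum.inl e)) (fun e => hc _)
  · intro e e' h1 h2
    exact Sum.inl_injective (hct _ _ h1 h2)
  · intro e e' h1 h2
    exact Sum.inl_injective (hch _ _ h1 h2)
  · intro v
    have hcompl : ∀ x, (x ∈ Set.Icc 1 (2 * k) ∧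
        ¬ ((∃ e : H.edgeSet, t (Sum.inl e) = v ∧ x = 2 * c (Sum.inl e) + 1) ∨
          (∃ e : H.edgeSet, h (Sum.inl e) = v ∧ x = 2 * c (Sum.inl e) + 2))) ↔
        ((∃ d : Fin j ⊕ L, t (Sum.inr d) = v ∧ x = 2 * c (Sum.inr d) + 1) ∨
          (∃ d : Fin j ⊕ L, h (Sum.inr d) = v ∧ x = 2 * c (Sum.inr d) + 2)) := by
      intro x
      constructor
      · rintro ⟨hx, hn⟩
        rw [Set.mem_Icc] at hx
        rcases Nat.even_or_odd' x with ⟨i, hi | hi⟩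
        · obtain ⟨e | d, h1, h2⟩ := hsh v (i - 1) (by omega)
          · exact absurd (Or.inr ⟨e, h1, by omega⟩) hn
          · exact Or.inr ⟨d, h1, by omega⟩
        · obtain ⟨e | d, h1, h2⟩ := hst v i (by omega)
          · exact absurd (Or.inl ⟨e, h1, by omega⟩) hn
          · exact Or.inl ⟨d, h1, by omega⟩
      · rintro (⟨d, h1, h2⟩ | ⟨d, h1, h2⟩)
        · have := hc (Sum.inr d)
          refine ⟨by rw [Set.mem_Icc]; omega, ?_⟩
          rintro (⟨e, h3, h4⟩ | ⟨e, h3, h4⟩)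
          · have := hct (Sum.inl e) (Sum.inr d) (by omega) (h3.trans h1.symm)
            simp at this
          · omega
        · have := hc (Sum.inr d)
          refine ⟨by rw [Set.mem_Icc]; omega, ?_⟩
          rintro (⟨e, h3, h4⟩ | ⟨e, h3, h4⟩)
          · omega
          · have := hch (Sum.inl e) (Sum.inr d) (by omega) (h3.trans h1.symm)
            simp at this
    simp only [hcompl]
    -- the dummy edges
    have hdi : ∀ i, (t (Sum.inr (Sum.inl i)) = (φ (Sum.inl i)).1 ∧
          h (Sum.inr (Sum.inl i)) = (φ (Sum.inr i)).1) ∨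
        (t (Sum.inr (Sum.inl i)) = (φ (Sum.inr i)).1 ∧
          h (Sum.inr (Sum.inl i)) = (φ (Sum.inl i)).1) := fun i => hor (Sum.inr (Sum.inl i))
    have hdl : ∀ l : L, t (Sum.inr (Sum.inr l)) = l.1 ∧ h (Sum.inr (Sum.inr l)) = l.1 := by
      intro l
      rcases hor (Sum.inr (Sum.inr l)) with h1 | h1 <;> exact h1
    have hodd : ∀ i, (t (Sum.inr (Sum.inl i)) = v ∨ h (Sum.inr (Sum.inl i)) = v) →
        Odd (H.degree v) := by
      intro i hi
      have h1 := (φ (Sum.inl i)).2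
      have h2 := (φ (Sum.inr i)).2
      rcases hdi i with ⟨h3, h4⟩ | ⟨h3, h4⟩ <;> rw [h3, h4] at hi <;>
        rcases hi with hi | hi <;> rw [← hi] <;> assumption
    have hlow : ∀ l : L, (t (Sum.inr (Sum.inr l)) = v ∨ h (Sum.inr (Sum.inr l)) = v) →
        l.1 = v := by
      intro l hl
      rw [(hdl l).1, (hdl l).2] at hl
      tauto
    by_cases ho : Odd (H.degree v)
    · -- one missing color
      have hnl : ∀ l : L, l.1 ≠ v := by
        rintro ⟨w, hw⟩ rfl
        rw [Nat.odd_iff] at ho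
        simp only at ho
        omega
      obtain ⟨y, hy⟩ := φ.surjective ⟨v, ho⟩
      have hyv : ∀ y', (φ y').1 = v → y' = y := by
        intro y' h'
        apply φ.injective
        rw [hy]
        exact Subtype.ext h'
      have hyv' : (φ y).1 = v := by rw [hy]
      have key : ∃ i, (t (Sum.inr (Sum.inl i)) = v ∧ h (Sum.inr (Sum.inl i)) ≠ v ∨
          t (Sum.inr (Sum.inl i)) ≠ v ∧ h (Sum.inr (Sum.inl i)) = v) ∧
          ∀ i', (t (Sum.inr (Sum.inl i')) = v ∨ h (Sum.inr (Sum.inl i')) = v) → i' = i := by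
        rcases y with i | i
        · have hl : ∀ i', (φ (Sum.inl i')).1 = v → i' = i :=
            fun i' h' => Sum.inl_injective (hyv _ h')
          have hr : ∀ i', (φ (Sum.inr i')).1 ≠ v := fun i' h' => by simpa using hyv _ h'
          refine ⟨i, ?_, ?_⟩
          · have := hr i
            rcases hdi i with ⟨h3, h4⟩ | ⟨h3, h4⟩ <;> rw [h3, h4] <;> tauto
          · intro i'
            have := hr i'
            have := hl i'
            rcases hdi i' with ⟨h3, h4⟩ | ⟨h3, h4⟩ <;> rw [h3, h4] <;> tauto
        · have hl : ∀ i', (φ (Sum.inr i')).1 = v → i' = i :=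
            fun i' h' => Sum.inr_injective (hyv _ h')
          have hr : ∀ i', (φ (Sum.inl i')).1 ≠ v := fun i' h' => by simpa using hyv _ h'
          refine ⟨i, ?_, ?_⟩
          · have := hr i
            rcases hdi i with ⟨h3, h4⟩ | ⟨h3, h4⟩ <;> rw [h3, h4] <;> tauto
          · intro i'
            have := hr i'
            have := hl i'
            rcases hdi i' with ⟨h3, h4⟩ | ⟨h3, h4⟩ <;> rw [h3, h4] <;> tauto
      obtain ⟨i, hi | hi, huniq⟩ := key
      · refine ⟨2 * c (Sum.inr (Sum.inl i)) + 1, 2 * c (Sum.inr (Sum.inl i)) + 1, fun x => ?_⟩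
        rw [Set.mem_Icc]
        constructor
        · intro hx
          exact Or.inl ⟨Sum.inl i, hi.1, by omega⟩
        · rintro (⟨i' | l, h1, h2⟩ | ⟨i' | l, h1, h2⟩)
          · have := huniq i' (Or.inl h1)
            subst this
            omega
          · exact absurd (hlow l (Or.inl h1)) (hnl l)
          · have := huniq i' (Or.inr h1)
            subst this
            exact absurd h1 hi.2
          · exact absurd (hlow l (Or.inr h1)) (hnl l)
      · refine ⟨2 * c (Sum.inr (Sum.inl i)) + 2, 2 * c (Sum.inr (Sum.inl i)) + 2, fun x => ?_⟩
        rw [Set.mem_Icc]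
        constructor
        · intro hx
          exact Or.inr ⟨Sum.inl i, hi.2, by omega⟩
        · rintro (⟨i' | l, h1, h2⟩ | ⟨i' | l, h1, h2⟩)
          · have := huniq i' (Or.inl h1)
            subst this
            exact absurd h1 hi.1
          · exact absurd (hlow l (Or.inl h1)) (hnl l)
          · have := huniq i' (Or.inr h1)
            subst this
            omega
          · exact absurd (hlow l (Or.inr h1)) (hnl l)
    · by_cases hl : H.degree v + 2 = 2 * k
      · -- two missing colors, from the loop at `v`
        let l : L := ⟨v, hl⟩
        refine ⟨2 * c (Sum.inr (Sum.inr l)) + 1, 2 * c (Sum.inr (Sum.inr l)) + 2, fun x => ?_⟩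
        rw [Set.mem_Icc]
        constructor
        · intro hx
          by_cases hx1 : x = 2 * c (Sum.inr (Sum.inr l)) + 1
          · exact Or.inl ⟨Sum.inr l, (hdl l).1, hx1⟩
          · exact Or.inr ⟨Sum.inr l, (hdl l).2, by omega⟩
        · rintro (⟨i' | l', h1, h2⟩ | ⟨i' | l', h1, h2⟩)
          · exact absurd (hodd i' (Or.inl h1)) ho
          · have : l' = l := Subtype.ext (hlow l' (Or.inl h1))
            subst this
            omega
          · exact absurd (hodd i' (Or.inr h1)) ho
          · have : l' = l := Subtype.ext (hlow l' (Or.inr h1))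
            subst this
            omega
      · -- no missing colors
        refine ⟨1, 0, fun x => ?_⟩
        rw [Set.mem_Icc]
        constructor
        · intro hx; omega
        · rintro (⟨i' | l', h1, h2⟩ | ⟨i' | l', h1, h2⟩)
          · exact absurd (hodd i' (Or.inl h1)) ho
          · exact absurd ((hlow l' (Or.inl h1)) ▸ l'.2) hl
          · exact absurd (hodd i' (Or.inr h1)) ho
          · exact absurd ((hlow l' (Or.inr h1)) ▸ l'.2) hl
  · intro e
    rcases hor (Sum.inl e) with ⟨h1, h2⟩ | ⟨h1, h2⟩
    · rw [h1, h2]; exact hp e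
    · rw [h1, h2, Sym2.eq_swap]; exact hp e
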